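/- Let p be a prime and G a finite p-group of nilpotency class 2 such that G^p ≤ γ₂(G), with |γ₂(G)| = p^k and d(G) = d. If d ≥ k + 1, then |M(G)| ≤ p^{(1/2)d(d-1) + (1/2)k(k+1)}. -/

import Mathlib

/-- The Schur multiplier of a group `G`: the second cohomology group `H²(G, ℂˣ)`
of `G` with coefficients in `ℂˣ` (with trivial `G`-action), as in the paper. -/
noncomputable def schurMultiplier (G : Type) [Group G] : Type :=
  groupCohomology (Rep.trivial ℤ G (Additive ℂˣ)) 2

/-!
Let `N` be the derived subgroup of `G`; it is central. A class in `H²(G, ℂˣ)` restricts to the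
commutator pairing `(g, n) ↦ α(g, n) / α(n, g)` between `G` and `N`. Because `ℂˣ` is divisible, a
class with trivial pairing is inflated from `G / N`, and among the inflated classes the
transgressions of the `|N| = p ^ k` characters of `N` become trivial. Hence `p ^ k * |M(G)|` is at
most `|M(G / N)|` times the number of pairings that occur.

As `G / N` is elementary abelian, its classes are determined by their alternating pairings, of
which there are at most `p ^ (d * (d - 1) / 2)`. By the Hall-Witt identity the pairings `φ` between
`G` and `N` satisfy `φ(x, [y, z]) φ(y, [z, x]) φ(z, [x, y]) = 1`. There are at most
`p ^ (k * (k + 3) / 2)` such pairings: if `φ` kills `G × U` and `[y, z] ∉ U`, then making `φ(y, ·)`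
trivial on `N` and `φ(z, ·)` trivial on `U [y, G]` forces `φ` to kill `[y, z]` as well, so that `U`
can be enlarged.
-/

open scoped commutatorElement IsMulCommutative

section Cocycles

variable (G A : Type*) [Group G] [CommGroup A]

/-- The group of multiplicative `2`-cocycles of `G` with values in the trivial `G`-module `A`.
This is the multiplicative form of `groupCohomology.cocycles₂`. -/
def mulCocycles₂ : Subgroup (G → G → A) where
  carrier := {α | ∀ g h j, α (g * h) j * α g h = α h j * α g (h * j)}
  one_mem' _ _ _ := rfl
  mul_mem' {α β} hα hβ g h j := by
    simp only [Pi.mul_apply]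
    rw [mul_mul_mul_comm, hα, hβ, mul_mul_mul_comm]
  inv_mem' {α} hα g h j := by
    simpa only [Pi.inv_apply, mul_inv] using congrArg (·⁻¹) (hα g h j)

/-- The differential from `1`-cochains to `2`-cocycles, for a trivial action on `A`. -/
def coboundary₂ : (G → A) →* mulCocycles₂ G A where
  toFun f := ⟨fun g h => f g * f h / f (g * h), fun g h j => by
    dsimp only
    rw [mul_assoc g h j, div_mul_div_comm, div_mul_div_comm, div_eq_div_iff_mul_eq_mul]
    simp only [mul_comm, mul_left_comm]⟩
  map_one' := by
    ext
    simp
  map_mul' f f' := by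
    ext g h
    simp only [Pi.mul_apply, Subgroup.coe_mul, div_mul_div_comm, mul_mul_mul_comm]

/-- The subgroup of coboundaries in the group of multiplicative `2`-cocycles. -/
def mulCoboundaries₂ : Subgroup (mulCocycles₂ G A) :=
  (coboundary₂ G A).range

variable {G A}

theorem mulCocycles₂_apply_one_left (α : mulCocycles₂ G A) (g : G) : α.1 1 g = α.1 1 1 := by
  simpa using (α.2 1 1 g).symm

theorem mulCocycles₂_apply_one_right (α : mulCocycles₂ G A) (g : G) : α.1 g 1 = α.1 1 1 := by
  simpa using α.2 g 1 1

variable (A) in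
/-- Pullback of cocycles along a group homomorphism. -/
def inflation {Q : Type*} [Group Q] (π : G →* Q) : mulCocycles₂ Q A →* mulCocycles₂ G A where
  toFun β := ⟨fun g h => β.1 (π g) (π h), fun g h j => by
    simpa only [map_mul] using β.2 (π g) (π h) (π j)⟩
  map_one' := rfl
  map_mul' _ _ := rfl

theorem inflation_coboundary₂ {Q : Type*} [Group Q] (π : G →* Q) (f : Q → A) :
    inflation A π (coboundary₂ Q A f) = coboundary₂ G A (f ∘ π) := by
  ext g h
  simp [inflation, coboundary₂]

/-- The identification of multiplicative `2`-cocycles with the cocycles of Mathlib's additive group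
cohomology. -/
def mulCocycles₂Equiv (G A : Type) [Group G] [CommGroup A] :
    Additive (mulCocycles₂ G A) ≃+ groupCohomology.cocycles₂ (Rep.trivial ℤ G (Additive A)) where
  toFun α := ⟨fun x => .ofMul (α.toMul.1 x.1 x.2),
    (groupCohomology.mem_cocycles₂_iff (A := Rep.trivial ℤ G (Additive A)) _).2 α.toMul.2⟩
  invFun α := .ofMul ⟨fun g h => (α (g, h)).toMul,
    (groupCohomology.mem_cocycles₂_iff (A := Rep.trivial ℤ G (Additive A)) _).1 α.2⟩
  left_inv _ := rfl
  right_inv _ := rfl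
  map_add' _ _ := rfl

theorem mem_mulCoboundaries₂_iff_H2π_eq_zero {G A : Type} [Group G] [CommGroup A]
    (α : mulCocycles₂ G A) :
    α ∈ mulCoboundaries₂ G A ↔
      groupCohomology.H2π (Rep.trivial ℤ G (Additive A))
        (mulCocycles₂Equiv G A (.ofMul α)) = 0 := by
  have differential (f : G → A) (g h : G) :
      (groupCohomology.d₁₂ (Rep.trivial ℤ G (Additive A))).hom (fun x => .ofMul (f x)) (g, h) =
        .ofMul ((coboundary₂ G A f).1 g h) := by
    refine (groupCohomology.d₁₂_hom_apply _ _ _).trans ?_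
    exact congrArg Additive.ofMul (show f h / f (g * h) * f g = f g * f h / f (g * h) by
      rw [mul_comm, mul_div_assoc])
  rw [groupCohomology.H2π_eq_zero_iff]
  constructor
  · rintro ⟨f, rfl⟩
    exact ⟨fun g => .ofMul (f g), funext fun x => differential f x.1 x.2⟩
  · rintro ⟨f, hf⟩
    refine ⟨fun g => (f g).toMul, Subtype.ext <| funext₂ fun g h => ?_⟩
    exact Additive.ofMul.injective <|
      (differential (fun x => (f x).toMul) g h).symm.trans (congrFun hf (g, h))

theorem card_H2_trivial (G A : Type) [Group G] [CommGroup A] :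
    Nat.card (groupCohomology (Rep.trivial ℤ G (Additive A)) 2) =
      (mulCoboundaries₂ G A).index := by
  let toClass : mulCocycles₂ G A →*
      Multiplicative (groupCohomology.H2 (Rep.trivial ℤ G (Additive A))) :=
    AddMonoidHom.toMultiplicativeRight <|
      (groupCohomology.H2π (Rep.trivial ℤ G (Additive A))).hom.toAddMonoidHom.comp
        (mulCocycles₂Equiv G A).toAddMonoidHom
  have surjective_toClass : Function.Surjective toClass := by
    intro x
    induction x using groupCohomology.H2_induction_on with
    | h x => exact ⟨((mulCocycles₂Equiv G A).symm x).toMul, rfl⟩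
  have ker_toClass : toClass.ker = mulCoboundaries₂ G A :=
    Subgroup.ext fun α => (mem_mulCoboundaries₂_iff_H2π_eq_zero α).symm
  rw [← ker_toClass, Subgroup.index_ker, MonoidHom.range_eq_top.2 surjective_toClass]
  exact (Subgroup.card_top (G := Multiplicative (groupCohomology.H2 _))).symm

end Cocycles

section Divisible

theorem baer_additive_units (F : Type*) [Field F] [IsAlgClosed F] :
    Module.Baer ℤ (Additive Fˣ) := by
  have surjective_nsmul {n : ℕ} (hn : n ≠ 0) :
      Function.Surjective fun a : Additive Fˣ => n • a := by
    intro a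
    obtain ⟨z, hz⟩ := IsAlgClosed.exists_pow_nat_eq (a.toMul : F) (Nat.pos_of_ne_zero hn)
    have hz0 : z ≠ 0 := by
      rintro rfl
      exact a.toMul.ne_zero (by rw [← hz, zero_pow hn])
    exact ⟨.ofMul (Units.mk0 z hz0), Additive.toMul.injective (Units.ext hz)⟩
  let : DivisibleBy (Additive Fˣ) ℕ := divisibleByOfSMulRightSurj _ _ surjective_nsmul
  let : DivisibleBy (Additive Fˣ) ℤ := AddGroup.divisibleByIntOfDivisibleByNat _
  exact Module.Baer.of_divisible _

theorem exists_retraction_of_baer {A H : Type*} [CommGroup A] [CommGroup H]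
    (hA : Module.Baer ℤ (Additive A)) (i : A →* H) (hi : Function.Injective i) :
    ∃ r : H →* A, ∀ a, r (i a) = a := by
  obtain ⟨r, hr⟩ := hA.extension_property_addMonoidHom i.toAdditive hi (AddMonoidHom.id _)
  exact ⟨MonoidHom.toAdditive.symm r, fun a => DFunLike.congr_fun hr (.ofMul a)⟩

end Divisible

section CocycleExtension

variable {G A : Type*} [Group G] [CommGroup A]

/-- The central extension of `G` by `A` classified by the cocycle `α`: pairs `(coeff, base)`
multiplied by `(a, g) (b, h) = (a b α(g, h), g h)`. The cocycle is not assumed to be normalized,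
so the identity is `(α(1, 1)⁻¹, 1)`. -/
@[ext]
structure CocycleExtension (α : mulCocycles₂ G A) where
  coeff : A
  base : G

namespace CocycleExtension

variable {α : mulCocycles₂ G A}

instance : Mul (CocycleExtension α) :=
  ⟨fun x y => ⟨x.coeff * y.coeff * α.1 x.base y.base, x.base * y.base⟩⟩

instance : One (CocycleExtension α) :=
  ⟨⟨(α.1 1 1)⁻¹, 1⟩⟩

instance : Inv (CocycleExtension α) :=
  ⟨fun x => ⟨x.coeff⁻¹ * (α.1 x.base⁻¹ x.base)⁻¹ * (α.1 1 1)⁻¹, x.base⁻¹⟩⟩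

@[simp] theorem base_mul (x y : CocycleExtension α) : (x * y).base = x.base * y.base := rfl

@[simp] theorem coeff_mul (x y : CocycleExtension α) :
    (x * y).coeff = x.coeff * y.coeff * α.1 x.base y.base := rfl

@[simp] theorem base_one : (1 : CocycleExtension α).base = 1 := rfl

@[simp] theorem coeff_one : (1 : CocycleExtension α).coeff = (α.1 1 1)⁻¹ := rfl

@[simp] theorem base_inv (x : CocycleExtension α) : x⁻¹.base = x.base⁻¹ := rfl

@[simp] theorem coeff_inv (x : CocycleExtension α) :
    x⁻¹.coeff = x.coeff⁻¹ * (α.1 x.base⁻¹ x.base)⁻¹ * (α.1 1 1)⁻¹ := rfl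

instance : Group (CocycleExtension α) :=
  Group.ofLeftAxioms
    (fun x y z => by
      ext1
      · calc x.coeff * y.coeff * α.1 x.base y.base * z.coeff * α.1 (x.base * y.base) z.base
            = x.coeff * y.coeff * z.coeff *
                (α.1 (x.base * y.base) z.base * α.1 x.base y.base) := by ac_rfl
          _ = x.coeff * (y.coeff * z.coeff * α.1 y.base z.base) *
                α.1 x.base (y.base * z.base) := by rw [α.2]; ac_rfl
      · exact mul_assoc _ _ _)
    (fun x => by
      ext1
      · simp [mulCocycles₂_apply_one_left α, mul_comm]
      · exact one_mul _)
    (fun x => by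
      ext1
      · simp [mul_assoc, mul_left_comm x.coeff⁻¹]
      · exact inv_mul_cancel _)

variable (α) in
/-- The projection of the extension onto `G`. -/
def proj : CocycleExtension α →* G where
  toFun := base
  map_one' := rfl
  map_mul' _ _ := rfl

variable (α) in
/-- The inclusion of `A` into the extension. -/
@[simps]
def incl : A →* CocycleExtension α where
  toFun a := ⟨a * (α.1 1 1)⁻¹, 1⟩
  map_one' := by ext <;> simp
  map_mul' a b := by ext <;> simp [mul_assoc, mul_left_comm, mul_comm]

variable (α) in
/-- The set-theoretic section of the projection whose failure to be multiplicative is `α`. -/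
@[simps]
def lift (g : G) : CocycleExtension α := ⟨1, g⟩

theorem incl_injective : Function.Injective (incl α) := fun _ _ h =>
  mul_right_cancel (congrArg coeff h)

theorem incl_mul (a : A) (x : CocycleExtension α) : incl α a * x = ⟨a * x.coeff, x.base⟩ := by
  ext <;> simp [mulCocycles₂_apply_one_left α, mul_right_comm]

theorem incl_mem_center (a : A) : incl α a ∈ Subgroup.center (CocycleExtension α) := by
  refine Subgroup.mem_center_iff.2 fun x => ?_
  rw [incl_mul]
  ext <;> simp [mulCocycles₂_apply_one_right α, mul_assoc, mul_comm a]

theorem lift_mul_lift (g h : G) : lift α g * lift α h = incl α (α.1 g h) * lift α (g * h) := by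
  rw [incl_mul]
  ext <;> simp

theorem commutatorElement_eq_incl {x y : CocycleExtension α} (hxy : Commute x.base y.base) :
    ⁅x, y⁆ = incl α (α.1 x.base y.base / α.1 y.base x.base) := by
  rw [commutatorElement_def, mul_assoc, ← mul_inv_rev, mul_inv_eq_iff_eq_mul, incl_mul]
  ext
  · rw [coeff_mul, coeff_mul, mul_comm y.coeff, mul_left_comm, div_mul_cancel]
  · exact hxy

end CocycleExtension

end CocycleExtension

section Transgression

variable {E Q A : Type*} [Group E] [Group Q] [CommGroup A] {π : E →* Q} (hπ : Function.Surjective π)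

/-- The component of `x` in the kernel of `π`, relative to the section `Function.surjInv hπ`. -/
noncomputable def fiberPart (x : E) : π.ker :=
  ⟨x * (Function.surjInv hπ (π x))⁻¹, by simp [MonoidHom.mem_ker, Function.surjInv_eq hπ]⟩

/-- The factor set of the extension `π` relative to the section `Function.surjInv hπ`. -/
noncomputable def factorSet (u v : Q) : π.ker :=
  ⟨Function.surjInv hπ u * Function.surjInv hπ v * (Function.surjInv hπ (u * v))⁻¹, by
    simp [MonoidHom.mem_ker, Function.surjInv_eq hπ]⟩

theorem fiberPart_mul_surjInv (x : E) : fiberPart hπ x * Function.surjInv hπ (π x) = x :=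
  inv_mul_cancel_right _ _

theorem factorSet_mul_surjInv (u v : Q) :
    factorSet hπ u v * Function.surjInv hπ (u * v) =
      Function.surjInv hπ u * Function.surjInv hπ v :=
  inv_mul_cancel_right _ _

theorem fiberPart_ker_mul (n : π.ker) (x : E) :
    fiberPart hπ (n * x) = n * fiberPart hπ x := by
  ext
  simp [fiberPart, MonoidHom.mem_ker.1 n.2, mul_assoc]

variable (hker : π.ker ≤ Subgroup.center E)
include hker

theorem fiberPart_mul (x y : E) :
    fiberPart hπ (x * y) = fiberPart hπ x * fiberPart hπ y * factorSet hπ (π x) (π y) := by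
  have central (n : π.ker) (z : E) : n * z = z * n :=
    (Subgroup.mem_center_iff.1 (hker n.2) z).symm
  apply Subtype.ext
  apply mul_right_cancel (b := Function.surjInv hπ (π (x * y)))
  rw [fiberPart_mul_surjInv, map_mul, Subgroup.coe_mul, mul_assoc _ (factorSet hπ _ _ : E),
    factorSet_mul_surjInv, Subgroup.coe_mul, mul_assoc, ← mul_assoc (fiberPart hπ y : E),
    central (fiberPart hπ y), mul_assoc, fiberPart_mul_surjInv, ← mul_assoc,
    fiberPart_mul_surjInv]

theorem map_factorSet (χ : π.ker →* A) (x y : E) :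
    χ (factorSet hπ (π x) (π y)) =
      (coboundary₂ E A fun z => (χ (fiberPart hπ z))⁻¹).1 x y := by
  change _ = (χ (fiberPart hπ x))⁻¹ * (χ (fiberPart hπ y))⁻¹ / (χ (fiberPart hπ (x * y)))⁻¹
  rw [fiberPart_mul hπ hker, map_mul, map_mul, div_inv_eq_mul, ← mul_inv, inv_mul_cancel_left]

variable (A) in
/-- The transgression of a character of the kernel of a central extension `π : E →* Q`: its
composition with the factor set, as a cocycle on `Q`. -/
noncomputable def transgression : (π.ker →* A) →* mulCocycles₂ Q A where
  toFun χ := ⟨fun u v => χ (factorSet hπ u v), by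
    intro u v w
    obtain ⟨x, rfl⟩ := hπ u
    obtain ⟨y, rfl⟩ := hπ v
    obtain ⟨z, rfl⟩ := hπ w
    simp only [← map_mul, map_factorSet hπ hker]
    exact (coboundary₂ E A _).2 x y z⟩
  map_one' := rfl
  map_mul' _ _ := rfl

theorem inflation_transgression (χ : π.ker →* A) :
    inflation A π (transgression A hπ hker χ) =
      coboundary₂ E A fun x => (χ (fiberPart hπ x))⁻¹ :=
  Subtype.ext <| funext₂ <| map_factorSet hπ hker χ

theorem eq_one_of_transgression_mem_mulCoboundaries₂ (hcomm : π.ker ≤ commutator E)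
    {χ : π.ker →* A} (hχ : transgression A hπ hker χ ∈ mulCoboundaries₂ Q A) : χ = 1 := by
  obtain ⟨f, hf⟩ := hχ
  have factorSet_eq (u v : Q) : χ (factorSet hπ u v) = f u * f v / f (u * v) :=
    (congrArg (fun β : mulCocycles₂ Q A => β.1 u v) hf).symm
  let extension : E →* A := .mk' (fun x => χ (fiberPart hπ x) * f (π x)) fun x y => by
    rw [fiberPart_mul hπ hker, map_mul, map_mul, factorSet_eq, map_mul π, mul_assoc _ (_ / _),
      div_mul_cancel, mul_mul_mul_comm]
  have extension_ker_mul (n : π.ker) (x : E) : extension (n * x) = χ n * extension x := by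
    simp [extension, fiberPart_ker_mul, MonoidHom.mem_ker.1 n.2, mul_assoc]
  ext n
  have : χ n = extension n := by simpa using (extension_ker_mul n 1).symm
  rw [this]
  exact Abelianization.commutator_subset_ker extension (hcomm n.2)

end Transgression

section CommutatorPairing

variable {G N Q A : Type*} [Group G] [Group N] [Group Q] [CommGroup A]

open CocycleExtension in
theorem mulCocycles₂_div_swap_mul (α : mulCocycles₂ G A) {x y z : G} (hxz : Commute x z)
    (hyz : Commute y z) :
    α.1 (x * y) z / α.1 z (x * y) = α.1 x z / α.1 z x * (α.1 y z / α.1 z y) := by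
  have commutator_lift {u v : G} (huv : Commute u v) :
      ⁅lift α u, lift α v⁆ = incl α (α.1 u v / α.1 v u) := commutatorElement_eq_incl huv
  have commutator_lift_mul : ⁅lift α x * lift α y, lift α z⁆ = incl α _ :=
    commutatorElement_eq_incl (hxz.mul_left hyz)
  refine incl_injective (commutator_lift_mul.symm.trans ?_)
  rw [commutatorElement_mul_left_eq_conj_mul, commutator_lift hyz, commutator_lift hxz,
    Subgroup.mem_center_iff.1 (incl_mem_center _) (lift α x), mul_inv_cancel_right, ← map_mul,
    mul_comm]

variable (A) in
/-- The pairing `(g, n) ↦ α(g, n) / α(n, g)` between `G` and a group `N` with a map to its center.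
It is the commutator pairing of the extension classified by `α`. -/
def commutatorPairing (j : N →* G) (hj : ∀ g n, Commute g (j n)) :
    mulCocycles₂ G A →* G →* N →* A where
  toFun α := .mk'
    (fun g => .mk' (fun n => α.1 g (j n) / α.1 (j n) g) fun m n => by
      rw [← inv_div, map_mul, mulCocycles₂_div_swap_mul α (hj g m).symm (hj g n).symm, mul_inv,
        inv_div, inv_div])
    fun g h => MonoidHom.ext fun n => mulCocycles₂_div_swap_mul α (hj g n) (hj h n)
  map_one' := by
    ext
    simp
  map_mul' α β := by
    ext g n
    exact mul_div_mul_comm _ _ _ _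

theorem mem_ker_commutatorPairing {j : N →* G} {hj : ∀ g n, Commute g (j n)}
    {α : mulCocycles₂ G A} :
    α ∈ (commutatorPairing A j hj).ker ↔ ∀ g n, α.1 g (j n) = α.1 (j n) g := by
  simp only [MonoidHom.mem_ker, MonoidHom.ext_iff]
  exact forall₂_congr fun g n => div_eq_one

theorem mulCoboundaries₂_le_ker_commutatorPairing (j : N →* G) (hj : ∀ g n, Commute g (j n)) :
    mulCoboundaries₂ G A ≤ (commutatorPairing A j hj).ker := by
  rintro _ ⟨f, rfl⟩
  refine mem_ker_commutatorPairing.2 fun g n => ?_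
  simp [coboundary₂, (hj g n).eq, mul_comm (f g)]

theorem commute_subtype_of_le_center {N : Subgroup G} (hN : N ≤ Subgroup.center G) (g : G)
    (n : N) : Commute g (N.subtype n) :=
  Subgroup.mem_center_iff.1 (hN n.2) g

theorem isMulCommutative_of_le_center {N : Subgroup G} (hN : N ≤ Subgroup.center G) :
    IsMulCommutative N :=
  .of_setLike_mul_comm fun m _ n hn => commute_subtype_of_le_center hN m ⟨n, hn⟩

theorem ker_comp_proj_le_center {α : mulCocycles₂ G A} {π : G →* Q}
    (hker : π.ker ≤ Subgroup.center G) (hα : ∀ g (n : π.ker), α.1 g n = α.1 n g) :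
    (π.comp (CocycleExtension.proj α)).ker ≤ Subgroup.center (CocycleExtension α) := by
  intro x hx
  refine Subgroup.mem_center_iff.2 fun y => ?_
  have comm : Commute y.base x.base := Subgroup.mem_center_iff.1 (hker hx) y.base
  rw [← commutatorElement_eq_one_iff_mul_comm, CocycleExtension.commutatorElement_eq_incl comm,
    hα y.base ⟨x.base, hx⟩, div_self', map_one]

open CocycleExtension in
-- A retraction of the cocycle extension `E` of `α` onto `A`, defined on the center of `E`,
-- restricts to a character of the kernel of `E → Q`; its transgression is the required cocycle.
theorem mem_mulCoboundaries₂_sup_range_inflation (hA : Module.Baer ℤ (Additive A)) {π : G →* Q}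
    (hπ : Function.Surjective π) (hker : π.ker ≤ Subgroup.center G) {α : mulCocycles₂ G A}
    (hα : ∀ g (n : π.ker), α.1 g n = α.1 n g) :
    α ∈ mulCoboundaries₂ G A ⊔ (inflation A π).range := by
  let ρ := π.comp (proj α)
  have surjective_ρ : Function.Surjective ρ := fun q =>
    (hπ q).imp' (lift α) fun g hg => hg
  have ker_ρ_le_center : ρ.ker ≤ Subgroup.center (CocycleExtension α) :=
    ker_comp_proj_le_center hker hα
  let inclCenter : A →* Subgroup.center (CocycleExtension α) :=
    (incl α).codRestrict _ incl_mem_center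
  have injective_inclCenter : Function.Injective inclCenter := fun _ _ h =>
    incl_injective (congrArg Subtype.val h)
  obtain ⟨r, hr⟩ := exists_retraction_of_baer hA inclCenter injective_inclCenter
  let χ : ρ.ker →* A := r.comp (Subgroup.inclusion ker_ρ_le_center)
  have fiberPart_incl_mul (a : A) (x : CocycleExtension α) :
      χ (fiberPart surjective_ρ (incl α a * x)) = a * χ (fiberPart surjective_ρ x) := by
    have mem_ker : incl α a ∈ ρ.ker := map_one π
    rw [fiberPart_ker_mul surjective_ρ ⟨incl α a, mem_ker⟩, map_mul]
    exact congrArg (· * _) (hr a)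
  let β := transgression A surjective_ρ ker_ρ_le_center χ
  let c (g : G) : A := χ (fiberPart surjective_ρ (lift α g))
  refine Subgroup.mem_sup.2 ⟨_, ⟨c, rfl⟩, _, ⟨β, rfl⟩, ?_⟩
  ext g h
  have β_apply : β.1 (π g) (π h) = (c g)⁻¹ * (c h)⁻¹ / (α.1 g h * c (g * h))⁻¹ := by
    rw [← fiberPart_incl_mul, ← lift_mul_lift]
    exact map_factorSet surjective_ρ ker_ρ_le_center χ (lift α g) (lift α h)
  change c g * c h / c (g * h) * β.1 (π g) (π h) = α.1 g h
  rw [β_apply, div_inv_eq_mul, ← mul_inv, mul_comm (c g * c h)⁻¹, mul_comm (α.1 g h),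
    mul_assoc, ← mul_assoc (_ / _), div_mul_cancel, mul_inv_cancel_comm_assoc]

theorem ker_commutatorPairing_ker (hA : Module.Baer ℤ (Additive A)) {π : G →* Q}
    (hπ : Function.Surjective π) (hker : π.ker ≤ Subgroup.center G) :
    (commutatorPairing A π.ker.subtype (commute_subtype_of_le_center hker)).ker =
      mulCoboundaries₂ G A ⊔ (inflation A π).range := by
  apply le_antisymm
  · intro α hα
    exact mem_mulCoboundaries₂_sup_range_inflation hA hπ hker (mem_ker_commutatorPairing.1 hα)
  · refine sup_le (mulCoboundaries₂_le_ker_commutatorPairing _ _) ?_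
    rintro _ ⟨β, rfl⟩
    refine mem_ker_commutatorPairing.2 fun g n => ?_
    simp [inflation, MonoidHom.mem_ker.1 n.2, mulCocycles₂_apply_one_left,
      mulCocycles₂_apply_one_right]

theorem ker_commutatorPairing_id {Q : Type*} [CommGroup Q] (hA : Module.Baer ℤ (Additive A)) :
    (commutatorPairing A (.id Q) .all).ker = mulCoboundaries₂ Q A := by
  refine le_antisymm (fun α hα => ?_) (mulCoboundaries₂_le_ker_commutatorPairing _ _)
  rw [mem_ker_commutatorPairing] at hα
  have inflation_range_le : (inflation A (1 : Q →* Unit)).range ≤ mulCoboundaries₂ Q A := by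
    rintro _ ⟨β, rfl⟩
    refine ⟨fun _ => β.1 1 1, ?_⟩
    ext
    simp [coboundary₂, inflation]
  rw [← sup_eq_left.2 inflation_range_le,
    ← ker_commutatorPairing_ker hA (fun _ => ⟨1, rfl⟩) (CommGroup.center_eq_top (G := Q) ▸ le_top),
    mem_ker_commutatorPairing]
  exact fun g n => hα g n

theorem card_characters_ker_mul_index_dvd (hA : Module.Baer ℤ (Additive A)) {π : G →* Q}
    (hπ : Function.Surjective π) (hker : π.ker ≤ Subgroup.center G)
    (hcomm : π.ker ≤ commutator G) :
    Nat.card (π.ker →* A) * (mulCoboundaries₂ G A).index ∣ (mulCoboundaries₂ Q A).index *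
      Nat.card
        (commutatorPairing A π.ker.subtype (commute_subtype_of_le_center hker)).range := by
  set pairing := commutatorPairing A π.ker.subtype (commute_subtype_of_le_center hker)
  set θ := transgression A hπ hker
  have relIndex_pairing_ker : (mulCoboundaries₂ G A).relIndex pairing.ker =
      ((mulCoboundaries₂ G A).comap (inflation A π)).index := by
    rw [ker_commutatorPairing_ker hA hπ hker, Subgroup.relIndex_sup_left, Subgroup.index_comap]
  have sup_le_comap : mulCoboundaries₂ Q A ⊔ θ.range ≤
      (mulCoboundaries₂ G A).comap (inflation A π) := by
    refine sup_le ?_ ?_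
    · rintro _ ⟨f, rfl⟩
      exact ⟨f ∘ π, (inflation_coboundary₂ π f).symm⟩
    · rintro _ ⟨χ, rfl⟩
      exact ⟨_, (inflation_transgression hπ hker χ).symm⟩
  have relIndex_range_transgression :
      (mulCoboundaries₂ Q A).relIndex (mulCoboundaries₂ Q A ⊔ θ.range) =
        Nat.card (π.ker →* A) := by
    have comap_eq_bot : (mulCoboundaries₂ Q A).comap θ = ⊥ :=
      (Subgroup.eq_bot_iff_forall _).2 fun χ hχ =>
        eq_one_of_transgression_mem_mulCoboundaries₂ hπ hker hcomm hχ
    rw [Subgroup.relIndex_sup_left, ← Subgroup.index_comap, comap_eq_bot, Subgroup.index_bot]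
  calc Nat.card (π.ker →* A) * (mulCoboundaries₂ G A).index
      = Nat.card (π.ker →* A) * ((mulCoboundaries₂ G A).comap (inflation A π)).index *
          pairing.ker.index := by
        rw [mul_assoc, ← relIndex_pairing_ker, Subgroup.relIndex_mul_index
          (mulCoboundaries₂_le_ker_commutatorPairing _ _)]
    _ ∣ Nat.card (π.ker →* A) * (mulCoboundaries₂ Q A ⊔ θ.range).index * pairing.ker.index :=
        mul_dvd_mul_right (mul_dvd_mul_left _ (Subgroup.index_dvd_of_le sup_le_comap)) _
    _ = (mulCoboundaries₂ Q A).index * Nat.card pairing.range := by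
        rw [← relIndex_range_transgression, Subgroup.relIndex_mul_index le_sup_left,
          Subgroup.index_ker]

end CommutatorPairing

section JacobiPairings

theorem exists_relIndex_eq_prime_pow {W : Type*} [Group W] {p t : ℕ} (hp : p.Prime)
    {U U' V : Subgroup W} (hUU' : U < U') (hU'V : U' ≤ V) (hUV : U.relIndex V = p ^ t) :
    ∃ r s, 0 < r ∧ r + s = t ∧ U.relIndex U' = p ^ r ∧ U'.relIndex V = p ^ s := by
  have tower := Subgroup.relIndex_mul_relIndex U U' V hUU'.le hU'V
  rw [hUV] at tower
  obtain ⟨r, -, hr⟩ := (Nat.dvd_prime_pow hp).1 (Dvd.intro _ tower)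
  obtain ⟨s, -, hs⟩ := (Nat.dvd_prime_pow hp).1 (Dvd.intro_left _ tower)
  have r_ne_zero : r ≠ 0 := by
    rintro rfl
    exact hUU'.not_ge (Subgroup.relIndex_eq_one.1 hr)
  rw [hr, hs, ← pow_add] at tower
  exact ⟨r, s, Nat.pos_of_ne_zero r_ne_zero, Nat.pow_right_injective hp.two_le tower, hr, hs⟩

variable {G W : Type*} [Group G] [CommGroup W]

/-- The pairings `φ : G × W → ℂˣ` satisfying the Jacobi identity
`φ(x, B(y, z)) φ(y, B(z, x)) φ(z, B(x, y)) = 1` relative to `B : G × G → W`. -/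
def jacobiPairings (B : G → G → W) : Subgroup (G →* W →* ℂˣ) where
  carrier := {φ | ∀ x y z, φ x (B y z) * φ y (B z x) * φ z (B x y) = 1}
  one_mem' := by simp
  mul_mem' {φ ψ} hφ hψ x y z := by
    have := congrArg₂ (· * ·) (hφ x y z) (hψ x y z)
    simp only [mul_one] at this
    rw [← this]
    simp only [MonoidHom.mul_apply]
    ac_rfl
  inv_mem' {φ} hφ x y z := by
    simpa only [MonoidHom.inv_apply, mul_inv, inv_one] using congrArg (·⁻¹) (hφ x y z)

/-- The pairings `φ` such that `φ(y, ·)` is trivial on `U`. -/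
def trivialAt (y : G) (U : Subgroup W) : Subgroup (G →* W →* ℂˣ) :=
  ((MonoidHom.domRestrictHom U ℂˣ).comp (MonoidHom.eval y)).ker

/-- The pairings which are trivial on `G × U`. -/
def trivialOn (G : Type*) [Group G] (U : Subgroup W) : Subgroup (G →* W →* ℂˣ) :=
  ⨅ y, trivialAt y U

theorem mem_trivialAt {y : G} {U : Subgroup W} {φ : G →* W →* ℂˣ} :
    φ ∈ trivialAt y U ↔ U ≤ (φ y).ker := by
  rw [trivialAt, MonoidHom.mem_ker, MonoidHom.ext_iff]
  exact Subtype.forall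

theorem mem_trivialOn {U : Subgroup W} {φ : G →* W →* ℂˣ} :
    φ ∈ trivialOn G U ↔ ∀ y, U ≤ (φ y).ker := by
  simp only [trivialOn, Subgroup.mem_iInf, mem_trivialAt]

theorem jacobiPairings_inf_trivialAt_le {B : G → G → W} (hB : ∀ x y, B x y = (B y x)⁻¹) (y z : G)
    (U : Subgroup W) :
    jacobiPairings B ⊓ trivialOn G U ⊓ trivialAt y ⊤ ⊓
        trivialAt z (U ⊔ Subgroup.closure (Set.range (B y))) ≤
      jacobiPairings B ⊓ trivialOn G (U ⊔ Subgroup.zpowers (B y z)) ⊓ trivialAt y ⊤ := by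
  rintro φ ⟨⟨⟨jacobi, trivial_on_U⟩, trivial_at_y⟩, trivial_at_z⟩
  refine ⟨⟨jacobi, mem_trivialOn.2 fun x => sup_le (mem_trivialOn.1 trivial_on_U x) ?_⟩,
    trivial_at_y⟩
  have hy : φ y (B z x) = 1 := mem_trivialAt.1 trivial_at_y trivial
  have hz : φ z (B x y) = 1 := by
    rw [hB, map_inv, inv_eq_one]
    exact mem_trivialAt.1 trivial_at_z
      (Subgroup.mem_sup_right (Subgroup.subset_closure (Set.mem_range_self x)))
  rw [Subgroup.zpowers_le, MonoidHom.mem_ker]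
  simpa only [hy, hz, mul_one] using jacobi x y z

variable [Finite W]

theorem card_le_relIndex_mul_card_inf_trivialAt {H : Subgroup (G →* W →* ℂˣ)} {y : G}
    {U : Subgroup W} (hH : H ≤ trivialAt y U) (V : Subgroup W) :
    Nat.card H ≤ U.relIndex V * Nat.card (H ⊓ trivialAt y V : Subgroup _) := by
  let restriction : (G →* W →* ℂˣ) →* (V →* ℂˣ) :=
    (MonoidHom.domRestrictHom V ℂˣ).comp (MonoidHom.eval y)
  have card_image_le : Nat.card (H.map restriction) ≤ U.relIndex V := by
    rw [Subgroup.relIndex, Subgroup.index, ← CommGroup.card_domRestrictHom_ker ℂ]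
    refine Subgroup.card_le_of_le ?_
    rintro _ ⟨φ, hφ, rfl⟩
    ext u
    exact congrArg Units.val (mem_trivialAt.1 (hH hφ) u.2)
  calc Nat.card H = Nat.card (H.map restriction) * Nat.card (H ⊓ trivialAt y V : Subgroup _) := by
        rw [← Subgroup.relIndex_ker, ← Subgroup.relIndex_bot_left, ← Subgroup.relIndex_bot_left,
          ← bot_inf_eq restriction.ker, ← Subgroup.relIndex_inf_mul_relIndex, bot_inf_eq, mul_comm,
          inf_comm]
        rfl
    _ ≤ _ := Nat.mul_le_mul_right _ card_image_le

theorem two_mul_add_mul_succ_le {r s : ℕ} (hr : 0 < r) :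
    2 * (r + s) + s * (s + 1) ≤ (r + s) * (r + s + 1) := by
  obtain ⟨q, rfl⟩ := Nat.exists_eq_add_of_le' hr
  nlinarith

variable [Finite G]

instance finite_pairings : Finite (G →* W →* ℂˣ) :=
  .of_injective _ DFunLike.coe_injective

theorem card_jacobiPairings_inf_trivialAt_le {p : ℕ} (hp : p.Prime) {B : G → G → W}
    (hB : ∀ x y, B x y = (B y x)⁻¹) (y : G) (t : ℕ) (U : Subgroup W)
    (hU : U.relIndex (U ⊔ Subgroup.closure (Set.range (B y))) = p ^ t) :
    Nat.card (jacobiPairings B ⊓ trivialOn G U ⊓ trivialAt y ⊤ : Subgroup _) ≤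
      p ^ (t * (t + 1) / 2) * Nat.card
        (jacobiPairings B ⊓ trivialOn G (U ⊔ Subgroup.closure (Set.range (B y))) :
          Subgroup _) := by
  induction t using Nat.strong_induction_on generalizing U with
  | _ t ih =>
  set D := Subgroup.closure (Set.range (B y))
  by_cases hD : D ≤ U
  · rw [sup_eq_left.2 hD]
    exact (Subgroup.card_le_of_le inf_le_left).trans (Nat.le_mul_of_pos_left _ (pow_pos hp.pos _))
  obtain ⟨z, hz⟩ : ∃ z, B y z ∉ U := by
    by_contra! h
    exact hD ((Subgroup.closure_le U).2 (Set.range_subset_iff.2 h))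
  let U' := U ⊔ Subgroup.zpowers (B y z)
  have U_lt_U' : U < U' := left_lt_sup.2 fun h => hz (h (Subgroup.mem_zpowers _))
  have U'_sup_D : U' ⊔ D = U ⊔ D := by
    have : Subgroup.zpowers (B y z) ≤ D :=
      Subgroup.zpowers_le.2 (Subgroup.subset_closure (Set.mem_range_self z))
    rw [sup_assoc, sup_eq_right.2 this]
  obtain ⟨r, s, r_pos, rfl, -, hU'⟩ :=
    exists_relIndex_eq_prime_pow hp U_lt_U' (le_sup_left.trans U'_sup_D.le) hU
  have bound_U' := ih s (by omega) U' (by rw [U'_sup_D, hU'])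
  rw [U'_sup_D] at bound_U'
  calc Nat.card (jacobiPairings B ⊓ trivialOn G U ⊓ trivialAt y ⊤ : Subgroup _)
      ≤ p ^ (r + s) * Nat.card (jacobiPairings B ⊓ trivialOn G U ⊓ trivialAt y ⊤ ⊓
          trivialAt z (U ⊔ D) : Subgroup _) := by
        rw [← hU]
        exact card_le_relIndex_mul_card_inf_trivialAt
          (inf_le_left.trans (inf_le_right.trans (iInf_le _ z))) _
    _ ≤ p ^ (r + s) * (p ^ (s * (s + 1) / 2) *
          Nat.card (jacobiPairings B ⊓ trivialOn G (U ⊔ D) : Subgroup _)) :=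
        Nat.mul_le_mul_left _
          ((Subgroup.card_le_of_le (jacobiPairings_inf_trivialAt_le hB y z U)).trans bound_U')
    _ ≤ _ := by
        rw [← mul_assoc, ← pow_add]
        refine Nat.mul_le_mul_right _ (Nat.pow_le_pow_right hp.pos ?_)
        have := two_mul_add_mul_succ_le (s := s) r_pos
        omega

theorem card_jacobiPairings_inf_trivialOn_le {p : ℕ} (hp : p.Prime) {B : G → G → W}
    (hB : ∀ x y, B x y = (B y x)⁻¹)
    (hgen : Subgroup.closure (Set.range fun q : G × G => B q.1 q.2) = ⊤) (t : ℕ)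
    (U : Subgroup W) (hU : U.index = p ^ t) :
    Nat.card (jacobiPairings B ⊓ trivialOn G U : Subgroup _) ≤ p ^ (t * (t + 3) / 2) := by
  induction t using Nat.strong_induction_on generalizing U with
  | _ t ih =>
  by_cases U_eq_top : U = ⊤
  · have : trivialOn G U = ⊥ := (Subgroup.eq_bot_iff_forall _).2 fun φ hφ => by
      ext x w
      exact congrArg Units.val (mem_trivialOn.1 hφ x (U_eq_top ▸ trivial))
    rw [this, inf_bot_eq, Subgroup.card_bot]
    exact Nat.one_le_pow _ _ hp.pos
  obtain ⟨⟨y, z⟩, hyz⟩ : ∃ q : G × G, B q.1 q.2 ∉ U := by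
    by_contra! h
    exact U_eq_top (top_le_iff.1 (hgen ▸ (Subgroup.closure_le U).2 (Set.range_subset_iff.2 h)))
  let V := U ⊔ Subgroup.closure (Set.range (B y))
  have U_lt_V : U < V :=
    left_lt_sup.2 fun h => hyz (h (Subgroup.subset_closure (Set.mem_range_self z)))
  rw [← Subgroup.relIndex_top_right] at hU
  obtain ⟨r, s, r_pos, rfl, hUV, hV⟩ := exists_relIndex_eq_prime_pow hp U_lt_V le_top hU
  rw [Subgroup.relIndex_top_right] at hV
  calc Nat.card (jacobiPairings B ⊓ trivialOn G U : Subgroup _)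
      ≤ p ^ (r + s) *
          Nat.card (jacobiPairings B ⊓ trivialOn G U ⊓ trivialAt y ⊤ : Subgroup _) := by
        rw [← hU]
        exact card_le_relIndex_mul_card_inf_trivialAt (inf_le_right.trans (iInf_le _ y)) _
    _ ≤ p ^ (r + s) * (p ^ (r * (r + 1) / 2) *
          Nat.card (jacobiPairings B ⊓ trivialOn G V : Subgroup _)) :=
        Nat.mul_le_mul_left _ (card_jacobiPairings_inf_trivialAt_le hp hB y r U hUV)
    _ ≤ p ^ (r + s) * (p ^ (r * (r + 1) / 2) * p ^ (s * (s + 3) / 2)) := by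
        gcongr
        exact ih s (by omega) V hV
    _ ≤ _ := by
        rw [← pow_add, ← pow_add]
        refine Nat.pow_le_pow_right hp.pos ?_
        have doubled : 2 * (r + s) + r * (r + 1) + s * (s + 3) ≤ (r + s) * (r + s + 3) := by
          nlinarith [Nat.mul_le_mul_right s r_pos]
        omega

theorem card_jacobiPairings_le {p k : ℕ} (hp : p.Prime) {B : G → G → W}
    (hB : ∀ x y, B x y = (B y x)⁻¹)
    (hgen : Subgroup.closure (Set.range fun q : G × G => B q.1 q.2) = ⊤)
    (hk : Nat.card W = p ^ k) : Nat.card (jacobiPairings B) ≤ p ^ (k * (k + 3) / 2) := by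
  have trivialOn_bot : trivialOn G (⊥ : Subgroup W) = ⊤ :=
    (Subgroup.eq_top_iff' _).2 fun φ => mem_trivialOn.2 fun _ => bot_le
  simpa only [trivialOn_bot, inf_top_eq] using
    card_jacobiPairings_inf_trivialOn_le hp hB hgen k ⊥ (by rw [Subgroup.index_bot, hk])

end JacobiPairings

section AlternatingPairings

/-- The bimultiplicative maps `φ : Q × Q → A` with `φ(x, x) = 1` for all `x`. -/
def alternatingPairings (Q A : Type*) [Group Q] [CommGroup A] : Subgroup (Q →* Q →* A) where
  carrier := {φ | ∀ x, φ x x = 1}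
  one_mem' _ := rfl
  mul_mem' {φ ψ} hφ hψ x := by
    rw [MonoidHom.mul_apply, MonoidHom.mul_apply, hφ, hψ, one_mul]
  inv_mem' {φ} hφ x := by
    rw [MonoidHom.inv_apply, MonoidHom.inv_apply, hφ, inv_one]

variable {Q A : Type*} [Group Q] [CommGroup A]

theorem alternatingPairings_swap {φ : Q →* Q →* A} (hφ : φ ∈ alternatingPairings Q A) (x y : Q) :
    φ x y = (φ y x)⁻¹ := by
  have := hφ (x * y)
  rw [map_mul, map_mul, MonoidHom.mul_apply, MonoidHom.mul_apply, hφ, hφ, one_mul, mul_one] at this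
  exact eq_inv_of_mul_eq_one_right this

theorem alternatingPairings_ext {ι : Type*} [LinearOrder ι] {ε : ι → Q}
    (hε : Subgroup.closure (Set.range ε) = ⊤) {φ ψ : Q →* Q →* A}
    (hφ : φ ∈ alternatingPairings Q A) (hψ : ψ ∈ alternatingPairings Q A)
    (h : ∀ i j, j < i → φ (ε i) (ε j) = ψ (ε i) (ε j)) : φ = ψ := by
  have eq_on_generators (i j : ι) : φ (ε i) (ε j) = ψ (ε i) (ε j) := by
    rcases lt_trichotomy i j with hij | rfl | hij
    · rw [alternatingPairings_swap hφ, alternatingPairings_swap hψ, h j i hij]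
    · rw [hφ, hψ]
    · exact h i j hij
  refine MonoidHom.eq_of_eqOn_dense hε ?_
  rintro _ ⟨i, rfl⟩
  refine MonoidHom.eq_of_eqOn_dense hε ?_
  rintro _ ⟨j, rfl⟩
  exact eq_on_generators i j

theorem card_alternatingPairings_le {p d : ℕ} [NeZero p] (hQp : ∀ x : Q, x ^ p = 1) {ε : Fin d → Q}
    (hε : Subgroup.closure (Set.range ε) = ⊤) :
    Nat.card (alternatingPairings Q ℂˣ) ≤ p ^ (d * (d - 1) / 2) := by
  let values (φ : alternatingPairings Q ℂˣ) (q : (i : Fin d) × Fin i) : rootsOfUnity p ℂ :=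
    ⟨φ.1 (ε q.1) (ε (q.2.castLE q.1.2.le)), by
      rw [mem_rootsOfUnity, ← map_pow, hQp, map_one]⟩
  have injective_values : Function.Injective values := fun φ ψ h =>
    Subtype.ext <| alternatingPairings_ext hε φ.2 ψ.2 fun i j hij =>
      congrArg Subtype.val (congrFun h ⟨i, ⟨j, hij⟩⟩)
  refine (Nat.card_le_card_of_injective values injective_values).trans_eq ?_
  rw [Nat.card_fun, Complex.card_rootsOfUnity, Nat.card_sigma]
  simp only [Nat.card_eq_fintype_card, Fintype.card_fin]
  rw [Fin.sum_univ_eq_sum_range (fun i => i), Finset.sum_range_id]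

theorem index_mulCoboundaries₂_le {Q : Type*} [CommGroup Q] [Finite Q] {p d : ℕ} [NeZero p]
    (hQp : ∀ x : Q, x ^ p = 1) {ε : Fin d → Q} (hε : Subgroup.closure (Set.range ε) = ⊤) :
    (mulCoboundaries₂ Q ℂˣ).index ≤ p ^ (d * (d - 1) / 2) := by
  rw [← ker_commutatorPairing_id (baer_additive_units ℂ), Subgroup.index_ker]
  refine (Subgroup.card_le_of_le ?_).trans (card_alternatingPairings_le hQp hε)
  rintro _ ⟨α, rfl⟩ x
  exact div_self' _

end AlternatingPairings

section CentralDerivedSubgroup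

variable {G : Type*} [Group G] {N : Subgroup G}

/-- The commutator map `G × G → N` of a group whose derived subgroup lies in `N`. -/
def commutatorMap (hcomm : commutator G ≤ N) (x y : G) : N :=
  ⟨⁅x, y⁆, hcomm (Subgroup.commutator_mem_commutator trivial trivial)⟩

theorem commutatorMap_eq_inv_swap (hcomm : commutator G ≤ N) (x y : G) :
    commutatorMap hcomm x y = (commutatorMap hcomm y x)⁻¹ :=
  Subtype.ext (commutatorElement_inv y x).symm

theorem closure_range_commutatorMap (hN : N = commutator G) :
    Subgroup.closure (Set.range fun q : G × G => commutatorMap hN.ge q.1 q.2) = ⊤ := by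
  apply Subgroup.map_injective N.subtype_injective
  have range_comp : Set.range (N.subtype ∘ fun q : G × G => commutatorMap hN.ge q.1 q.2) =
      commutatorSet G := by
    ext
    simp [commutatorSet, commutatorMap]
  rw [MonoidHom.map_closure, ← Set.range_comp, range_comp, ← commutator_eq_closure,
    ← MonoidHom.range_eq_map, Subgroup.range_subtype, hN]

open CocycleExtension in
theorem commutatorPairing_mem_jacobiPairings [IsMulCommutative N] (hN : N ≤ Subgroup.center G)
    (hcomm : commutator G ≤ N) (α : mulCocycles₂ G ℂˣ) :
    commutatorPairing ℂˣ N.subtype (commute_subtype_of_le_center hN) α ∈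
      jacobiPairings (commutatorMap hcomm) := by
  set φ := commutatorPairing ℂˣ N.subtype (commute_subtype_of_le_center hN) α
  have triple_commutator (X Y Z : CocycleExtension α) :
      ⁅X, ⁅Y, Z⁆⁆ = incl α (φ X.base (commutatorMap hcomm Y.base Z.base)) :=
    commutatorElement_eq_incl
      (commute_subtype_of_le_center hN X.base (commutatorMap hcomm Y.base Z.base))
  have map_conj (x y : G) : φ (x * y * x⁻¹) = φ y := by
    rw [map_mul, map_mul, map_inv, mul_inv_cancel_comm]
  intro x y z
  have hall_witt := commutatorElement_conj_commutatorElement_mul (lift α x) (lift α y) (lift α z)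
  rw [triple_commutator, triple_commutator, triple_commutator, ← map_mul, ← map_mul,
    map_eq_one_iff _ incl_injective] at hall_witt
  simp only [base_mul, base_inv, lift_base, map_conj] at hall_witt
  rwa [mul_comm (φ y _)] at hall_witt

theorem card_range_commutatorPairing_le [Finite G] {p k : ℕ} (hp : p.Prime)
    (hcenter : N ≤ Subgroup.center G) (hN : N = commutator G) (hk : Nat.card N = p ^ k) :
    Nat.card (commutatorPairing ℂˣ N.subtype (commute_subtype_of_le_center hcenter)).range ≤
      p ^ (k * (k + 3) / 2) := by
  have := isMulCommutative_of_le_center hcenter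
  refine (Subgroup.card_le_of_le ?_).trans (card_jacobiPairings_le hp
    (commutatorMap_eq_inv_swap hN.ge) (closure_range_commutatorMap hN) hk)
  rintro _ ⟨α, rfl⟩
  exact commutatorPairing_mem_jacobiPairings hcenter hN.ge α

end CentralDerivedSubgroup

section SchurMultiplier

theorem exists_closure_range_eq_top_of_surjective {G Q : Type*} [Group G] [Group Q]
    [Group.FG G] {π : G →* Q} (hπ : Function.Surjective π) :
    ∃ ε : Fin (Group.rank G) → Q, Subgroup.closure (Set.range ε) = ⊤ := by
  obtain ⟨S, hS, hgen⟩ := Group.rank_spec G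
  refine ⟨fun i => π ((S.equivFinOfCardEq hS).symm i), ?_⟩
  have range_eq : Set.range (fun i => π ((S.equivFinOfCardEq hS).symm i)) = π '' S := by
    rw [Set.range_comp' π, Set.range_comp' Subtype.val, Equiv.range_eq_univ, Set.image_univ,
      Subtype.range_coe_subtype]
    rfl
  rw [range_eq, ← MonoidHom.map_closure, hgen, Subgroup.map_top_of_surjective π hπ]

theorem prime_pow_mul_card_schurMultiplier_le {p k : ℕ} (hp : p.Prime) (G : Type) [Group G]
    [Finite G] (hcenter : commutator G ≤ Subgroup.center G)
    (hGp : ∀ x : G, x ^ p ∈ commutator G) (hk : Nat.card (commutator G) = p ^ k) :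
    p ^ k * Nat.card (schurMultiplier G) ≤
      p ^ (Group.rank G * (Group.rank G - 1) / 2) * p ^ (k * (k + 3) / 2) := by
  let π : G →* Abelianization G := Abelianization.of
  have surjective_π : Function.Surjective π := QuotientGroup.mk_surjective
  have ker_π : π.ker = commutator G := Abelianization.ker_of G
  have hker : π.ker ≤ Subgroup.center G := ker_π.trans_le hcenter
  have hk : Nat.card π.ker = p ^ k := by rw [ker_π, hk]
  have := isMulCommutative_of_le_center hker
  have : NeZero p := ⟨hp.ne_zero⟩
  have pow_eq_one (x : Abelianization G) : x ^ p = 1 := by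
    obtain ⟨x, rfl⟩ := surjective_π x
    rw [← map_pow, ← MonoidHom.mem_ker, ker_π]
    exact hGp x
  obtain ⟨ε, hε⟩ := exists_closure_range_eq_top_of_surjective surjective_π
  have hdvd := card_characters_ker_mul_index_dvd (baer_additive_units ℂ) surjective_π hker ker_π.le
  rw [CommGroup.card_monoidHom_of_hasEnoughRootsOfUnity _ ℂ, hk, ← card_H2_trivial] at hdvd
  refine (Nat.le_of_dvd (Nat.mul_pos ?_ Nat.card_pos) hdvd).trans
    (Nat.mul_le_mul (index_mulCoboundaries₂_le pow_eq_one hε)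
      (card_range_commutatorPairing_le hp hker ker_π hk))
  rw [← ker_commutatorPairing_id (baer_additive_units ℂ), Subgroup.index_ker]
  exact Nat.card_pos

theorem card_schurMultiplier_le {p k : ℕ} (hp : p.Prime) (G : Type) [Group G] [Finite G]
    (hcenter : commutator G ≤ Subgroup.center G) (hGp : ∀ x : G, x ^ p ∈ commutator G)
    (hk : Nat.card (commutator G) = p ^ k) :
    Nat.card (schurMultiplier G) ≤
      p ^ (Group.rank G * (Group.rank G - 1) / 2 + k * (k + 1) / 2) := by
  have exponent : k * (k + 3) / 2 = k + k * (k + 1) / 2 := by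
    rw [← Nat.mul_add_div two_pos]
    ring_nf
  refine Nat.le_of_mul_le_mul_left ?_ (pow_pos hp.pos k)
  calc p ^ k * Nat.card (schurMultiplier G)
      ≤ p ^ (Group.rank G * (Group.rank G - 1) / 2) * p ^ (k * (k + 3) / 2) :=
        prime_pow_mul_card_schurMultiplier_le hp G hcenter hGp hk
    _ = p ^ k * p ^ (Group.rank G * (Group.rank G - 1) / 2 + k * (k + 1) / 2) := by
        rw [exponent, ← pow_add, ← pow_add, add_left_comm]

theorem commutator_le_center_of_nilpotencyClass_le_two {G : Type*} [Group G] [Group.IsNilpotent G]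
    (hc : Group.nilpotencyClass G ≤ 2) : commutator G ≤ Subgroup.center G := by
  rw [← Subgroup.commutator_top_right_eq_bot_iff_le_center, ← Subgroup.top_lowerCentralSeries_one]
  exact Subgroup.lowerCentralSeries_eq_bot_iff_nilpotencyClass_le.2 hc

theorem cast_mul_pred_div_two (d : ℕ) :
    ((d * (d - 1) / 2 : ℕ) : ℝ) = (d : ℝ) * ((d : ℝ) - 1) / 2 := by
  rw [← Nat.choose_two_right, Nat.cast_choose_two]

theorem cast_mul_succ_div_two (k : ℕ) :
    ((k * (k + 1) / 2 : ℕ) : ℝ) = (k : ℝ) * ((k : ℝ) + 1) / 2 := by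
  rw [Nat.cast_div (Nat.even_mul_succ_self k).two_dvd two_ne_zero]
  push_cast
  rfl

theorem schur_multiplier_upper_bound_class_two_d_ge_general (p k d : ℕ) (hp : p.Prime)
    (G : Type) [Group G] [Finite G] (hcenter : commutator G ≤ Subgroup.center G)
    (hGp : Subgroup.closure (Set.range fun x : G => x ^ p) ≤ commutator G)
    (hk : Nat.card (commutator G) = p ^ k)
    (hd : Group.rank G = d) :
    (Nat.card (schurMultiplier G) : ℝ) ≤
      (p : ℝ) ^ ((d : ℝ) * ((d : ℝ) - 1) / 2 + (k : ℝ) * ((k : ℝ) + 1) / 2) := by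
  have hGp' (x : G) : x ^ p ∈ commutator G := hGp (Subgroup.subset_closure (Set.mem_range_self x))
  subst hd
  rw [← cast_mul_pred_div_two, ← cast_mul_succ_div_two, ← Nat.cast_add, Real.rpow_natCast]
  exact_mod_cast card_schurMultiplier_le hp G hcenter hGp' hk

end SchurMultiplier

/-- Corollary 2, upper bound in the case `d ≥ k + 1`:
`|M(G)| ≤ p ^ (d * (d - 1) / 2 + k * (k + 1) / 2)`. -/
theorem schur_multiplier_upper_bound_class_two_d_ge (p k d : ℕ) (hp : p.Prime)
    (G : Type) [Group G] [Finite G] [Group.IsNilpotent G]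
    (hpG : IsPGroup p G)
    (hc : Group.nilpotencyClass G = 2)
    (hGp : Subgroup.closure (Set.range fun x : G => x ^ p) ≤ commutator G)
    (hk : Nat.card (commutator G) = p ^ k)
    (hd : Group.rank G = d)
    (hkd : k + 1 ≤ d) :
    (Nat.card (schurMultiplier G) : ℝ) ≤
      (p : ℝ) ^ ((d : ℝ) * ((d : ℝ) - 1) / 2 + (k : ℝ) * ((k : ℝ) + 1) / 2) :=
  schur_multiplier_upper_bound_class_two_d_ge_general p k d hp G
    (commutator_le_center_of_nilpotencyClass_le_two hc.le) hGp hk hd
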